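/- Let V be a finite set, 𝒞 a finite collection of subsets c ⊆ V, each with a weight w_c ≥ 0, and let cut_G(S) = Σ_{c∈𝒞} w_c·|S ∩ c|·|c ∖ S| be the associated co-occurrence cut function. There is an absolute constant C > 0 such that for every ε ∈ (0,1), setting F(ε) = ε^{−1/2}·(1 + log₂(1 + log₂(1/ε))), there exist a finite auxiliary node set A with |A| ≤ C·|𝒞|·F(ε) and a weight function ŵ : (V ∪ A) × (V ∪ A) → ℝ≥0 with at most C·F(ε)·Σ_{c∈𝒞}|c| nonzero values, such that for every S ⊆ V, cut_G(S) ≤ min_{T ⊆ A} dircut_ŵ(S ∪ T) ≤ (1+ε)·cut_G(S). -/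

import Mathlib

/-- Directed cut value of a weighted directed graph on a finite node set. -/
noncomputable def dirCut {N : Type*} [Fintype N] [DecidableEq N]
    (W : N → N → ℝ) (U : Finset N) : ℝ :=
  ∑ u ∈ U, ∑ v ∈ Uᶜ, W u v

/-!
A single co-occurrence set `c` contributes the concave function `s * r` of `s = |S ∩ c|`, where
`r = |c \ S|` and `s + r = |c|`. An auxiliary node joined to all of `c` contributes, after
minimizing over its side of the cut, a tent function `min (s * a) (r * b)`, and sums of tents
realize the piecewise linear interpolant of `s * r` on any grid. On the grid `sin² (j * h) * |c|`
with `h = π / (2 * (N + 1))` the interpolation error is `sin² h * (s * r)` minus a square on every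
cell, so rescaling by `1 + ε` gives a `(1 + ε)`-approximation once `(1 + ε) * cos² h ≥ 1`, which
needs only `N = O(1 / √ε)` auxiliary nodes per set.
-/

open Finset Real

section Cuts

variable {V ι : Type*} [DecidableEq V]

theorem cast_card_inter_add_cast_card_sdiff (S s : Finset V) :
    ((S ∩ s).card : ℝ) + (s \ S).card = s.card := by
  rw [inter_comm]
  exact_mod_cast card_inter_add_card_sdiff s S

variable [Fintype ι]

/-- The co-occurrence cut function `cut_G` of the sets `c i` with weights `w i`. -/
def cooccurrenceCut (c : ι → Finset V) (w : ι → ℝ) (S : Finset V) : ℝ :=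
  ∑ i, w i * ((S ∩ c i).card : ℝ) * ((c i \ S).card : ℝ)

theorem cooccurrenceCut_nonneg (c : ι → Finset V) {w : ι → ℝ} (hw : ∀ i, 0 ≤ w i)
    (S : Finset V) : 0 ≤ cooccurrenceCut c w S :=
  sum_nonneg fun i _ => mul_nonneg (mul_nonneg (hw i) (Nat.cast_nonneg _)) (Nat.cast_nonneg _)

theorem cooccurrenceCut_const_mul (c : ι → Finset V) (ρ : ℝ) (w : ι → ℝ) (S : Finset V) :
    cooccurrenceCut c (fun i => ρ * w i) S = ρ * cooccurrenceCut c w S := by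
  simp only [cooccurrenceCut, mul_sum, mul_assoc]

/-- The augmented cut of `S ⊆ V` in a directed graph on `V ⊕ A`: the least directed cut value over
all ways of adding auxiliary nodes to `S`. -/
noncomputable def augmentedCut {A : Type*} [Fintype V] [Fintype A] [DecidableEq A]
    (W : V ⊕ A → V ⊕ A → ℝ) (S : Finset V) : ℝ :=
  ⨅ T : Finset A, dirCut W (S.image Sum.inl ∪ T.image Sum.inr)

end Cuts

section Tents

variable {R : Type*} [CommRing R] [LinearOrder R] [IsStrictOrderedRing R] {t : ℕ → R} {s r : R}

/-- The nonnegative combination of tent functions with peaks at `t 1, …, t N` used to approximate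
`s * r`. It is kept homogeneous in `(s, r)`: when `t 0 = 0` and `t (N + 1) = 1`, on each line
`s + r = k` the function `k * tentSum t N s r` is the piecewise linear interpolant of `s * r` at
the points `s = t j * k`. -/
def tentSum (t : ℕ → R) (N : ℕ) (s r : R) : R :=
  ∑ j ∈ range N, (t (j + 2) - t j) * min (s * (1 - t (j + 1))) (r * t (j + 1))

theorem sum_range_tent_of_le {i : ℕ} (h0 : t 0 = 0)
    (h : ∀ j < i, t (j + 1) * (s + r) ≤ s) :
    ∑ j ∈ range i, (t (j + 2) - t j) * min (s * (1 - t (j + 1))) (r * t (j + 1))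
      = r * (t i * t (i + 1)) := by
  calc
    _ = ∑ j ∈ range i, (r * (t (j + 1) * t (j + 1 + 1)) - r * (t j * t (j + 1))) := by
      refine sum_congr rfl fun j hj => ?_
      have := h j (mem_range.mp hj)
      rw [min_eq_right (by linarith)]
      ring
    _ = r * (t i * t (i + 1)) := by
      rw [sum_range_sub (fun j => r * (t j * t (j + 1))), h0]
      ring

theorem sum_Ico_tent_of_ge {i N : ℕ} (hi : i ≤ N) (h1 : t (N + 1) = 1)
    (h : ∀ j, i ≤ j → j < N → s ≤ t (j + 1) * (s + r)) :
    ∑ j ∈ Ico i N, (t (j + 2) - t j) * min (s * (1 - t (j + 1))) (r * t (j + 1))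
      = s * ((1 - t i) * (1 - t (i + 1))) := by
  calc
    _ = ∑ j ∈ Ico i N, (-(s * ((1 - t (j + 1)) * (1 - t (j + 1 + 1))))
          - -(s * ((1 - t j) * (1 - t (j + 1))))) := by
      refine sum_congr rfl fun j hj => ?_
      have := h j (mem_Ico.mp hj).1 (mem_Ico.mp hj).2
      rw [min_eq_left (by linarith)]
      ring
    _ = s * ((1 - t i) * (1 - t (i + 1))) := by
      rw [sum_Ico_sub (fun j => -(s * ((1 - t j) * (1 - t (j + 1))))) hi, h1]
      ring

theorem add_mul_tentSum {i N : ℕ} (h0 : t 0 = 0) (h1 : t (N + 1) = 1)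
    (hmono : MonotoneOn t (Set.Iic (N + 1))) (hs : 0 ≤ s) (hr : 0 ≤ r) (hi : i ≤ N)
    (hl : t i * (s + r) ≤ s) (hu : s ≤ t (i + 1) * (s + r)) :
    (s + r) * tentSum t N s r = s * r - (s - t i * (s + r)) * (t (i + 1) * (s + r) - s) := by
  have hk : 0 ≤ s + r := add_nonneg hs hr
  have h_left : ∀ j < i, t (j + 1) * (s + r) ≤ s := fun j hj =>
    (mul_le_mul_of_nonneg_right
      (hmono (Set.mem_Iic.mpr (by omega)) (Set.mem_Iic.mpr (by omega)) hj) hk).trans hl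
  have h_right : ∀ j, i ≤ j → j < N → s ≤ t (j + 1) * (s + r) := fun j hij hj =>
    hu.trans (mul_le_mul_of_nonneg_right
      (hmono (Set.mem_Iic.mpr (by omega)) (Set.mem_Iic.mpr (by omega)) (by omega)) hk)
  rw [tentSum, ← sum_range_add_sum_Ico _ hi, sum_range_tent_of_le h0 h_left,
    sum_Ico_tent_of_ge hi h1 h_right]
  ring

end Tents

theorem exists_le_and_le_succ {α : Type*} [LinearOrder α] (u : ℕ → α) {x : α} {N : ℕ}
    (h0 : u 0 ≤ x) (h1 : x ≤ u (N + 1)) : ∃ i ≤ N, u i ≤ x ∧ x ≤ u (i + 1) := by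
  induction N with
  | zero => exact ⟨0, le_rfl, h0, h1⟩
  | succ N ih =>
    rcases le_total x (u (N + 1)) with hx | hx
    · obtain ⟨i, hi, hxi⟩ := ih hx
      exact ⟨i, by omega, hxi⟩
    · exact ⟨N + 1, le_rfl, hx, h1⟩

section Nodes

/-- The `j`-th Chebyshev–Lobatto point of the unit interval cut into `N + 1` cells, written
`sin² (j * h)` with `h = π / (2 * (N + 1))` instead of the usual `(1 - cos (2 * j * h)) / 2`. -/
noncomputable def sinSqNode (N j : ℕ) : ℝ := sin (j * (π / (2 * (N + 1)))) ^ 2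

theorem sinSqNode_zero (N : ℕ) : sinSqNode N 0 = 0 := by simp [sinSqNode]

theorem sinSqNode_last (N : ℕ) : sinSqNode N (N + 1) = 1 := by
  have h : ((N + 1 : ℕ) : ℝ) * (π / (2 * (N + 1))) = π / 2 := by
    push_cast
    field_simp
  rw [sinSqNode, h, sin_pi_div_two, one_pow]

theorem sinSqNode_nonneg (N j : ℕ) : 0 ≤ sinSqNode N j := sq_nonneg _

theorem sinSqNode_le_one (N j : ℕ) : sinSqNode N j ≤ 1 := sin_sq_le_one _

theorem monotoneOn_sinSqNode (N : ℕ) : MonotoneOn (sinSqNode N) (Set.Iic (N + 1)) := by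
  intro i _ j hj hij
  have hj' : (j : ℝ) * (π / (2 * (N + 1))) ≤ π / 2 := by
    calc (j : ℝ) * (π / (2 * (N + 1))) ≤ (N + 1) * (π / (2 * (N + 1))) := by
          gcongr
          exact_mod_cast hj
      _ = π / 2 := by field_simp
  have hi0 : 0 ≤ (i : ℝ) * (π / (2 * (N + 1))) := by positivity
  have hij' : (i : ℝ) * (π / (2 * (N + 1))) ≤ j * (π / (2 * (N + 1))) := by gcongr
  refine pow_le_pow_left₀ (sin_nonneg_of_nonneg_of_le_pi hi0 ?_) ?_ 2
  · linarith [pi_pos]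
  · exact sin_le_sin_of_le_of_le_pi_div_two (by linarith [pi_pos]) hj' hij'

theorem sub_sin_sq_mul_mul_sin_sq_mul_sub_le (α β s r : ℝ) :
    (s - sin α ^ 2 * (s + r)) * (sin β ^ 2 * (s + r) - s) ≤ sin (β - α) ^ 2 * (s * r) := by
  have key : (s - sin α ^ 2 * (s + r)) * (sin β ^ 2 * (s + r) - s) =
      sin (β - α) ^ 2 * (s * r) - (s * (cos α * cos β) - r * (sin α * sin β)) ^ 2 := by
    rw [sin_sub]
    ring_nf
    simp only [cos_sq']
    ring
  rw [key]
  exact sub_le_self _ (sq_nonneg _)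

variable (N : ℕ) {s r : ℝ}

theorem exists_add_mul_tentSum_sinSqNode (hs : 0 ≤ s) (hr : 0 ≤ r) :
    ∃ δ, (s + r) * tentSum (sinSqNode N) N s r = s * r - δ ∧
      0 ≤ δ ∧ δ ≤ sin (π / (2 * (N + 1))) ^ 2 * (s * r) := by
  obtain ⟨i, hi, hl, hu⟩ := exists_le_and_le_succ (fun j => sinSqNode N j * (s + r))
    (x := s) (N := N) (by simpa [sinSqNode_zero] using hs) (by simpa [sinSqNode_last] using hr)
  refine ⟨_, add_mul_tentSum (sinSqNode_zero N) (sinSqNode_last N) (monotoneOn_sinSqNode N)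
    hs hr hi hl hu, mul_nonneg (sub_nonneg.mpr hl) (sub_nonneg.mpr hu), ?_⟩
  have h_step : ((i + 1 : ℕ) : ℝ) * (π / (2 * (N + 1))) - i * (π / (2 * (N + 1)))
      = π / (2 * (N + 1)) := by
    push_cast
    ring
  simpa only [sinSqNode, h_step] using sub_sin_sq_mul_mul_sin_sq_mul_sub_le
    (i * (π / (2 * (N + 1)))) ((i + 1 : ℕ) * (π / (2 * (N + 1)))) s r

theorem add_mul_tentSum_sinSqNode_le (hs : 0 ≤ s) (hr : 0 ≤ r) :
    (s + r) * tentSum (sinSqNode N) N s r ≤ s * r := by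
  obtain ⟨δ, h_eq, hδ, -⟩ := exists_add_mul_tentSum_sinSqNode N hs hr
  linarith

theorem cos_sq_mul_le_add_mul_tentSum_sinSqNode (hs : 0 ≤ s) (hr : 0 ≤ r) :
    cos (π / (2 * (N + 1))) ^ 2 * (s * r) ≤ (s + r) * tentSum (sinSqNode N) N s r := by
  obtain ⟨δ, h_eq, -, hδ⟩ := exists_add_mul_tentSum_sinSqNode N hs hr
  rw [cos_sq']
  linarith

end Nodes

section Gadgets

variable {V A : Type*} [DecidableEq V]

/-- The bipartite gadget graph on `V ⊕ A`: each auxiliary node `e` has an edge of weight `a e` from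
every node of `c e` and an edge of weight `b e` to every node of `c e`. -/
def gadgetWeight (c : A → Finset V) (a b : A → ℝ) : V ⊕ A → V ⊕ A → ℝ
  | .inl v, .inr e => if v ∈ c e then a e else 0
  | .inr e, .inl v => if v ∈ c e then b e else 0
  | _, _ => 0

theorem gadgetWeight_nonneg {c : A → Finset V} {a b : A → ℝ} (ha : ∀ e, 0 ≤ a e)
    (hb : ∀ e, 0 ≤ b e) (u v : V ⊕ A) : 0 ≤ gadgetWeight c a b u v := by
  rcases u with u | e <;> rcases v with v | f <;> simp only [gadgetWeight, le_refl]
  · exact ite_nonneg (ha f) le_rfl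
  · exact ite_nonneg (hb e) le_rfl

variable [Fintype A]

theorem ncard_gadgetWeight_ne_zero_le (c : A → Finset V) (a b : A → ℝ) :
    {p : (V ⊕ A) × (V ⊕ A) | gadgetWeight c a b p.1 p.2 ≠ 0}.ncard ≤ 2 * ∑ e, (c e).card := by
  classical
  let incidences : Finset (Σ _ : A, V) := univ.sigma c
  let E : Finset ((V ⊕ A) × (V ⊕ A)) :=
    incidences.image (fun p => (.inl p.2, .inr p.1)) ∪
      incidences.image (fun p => (.inr p.1, .inl p.2))
  have h_sub : {p : (V ⊕ A) × (V ⊕ A) | gadgetWeight c a b p.1 p.2 ≠ 0} ⊆ E := by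
    rintro ⟨u | e, v | f⟩ h <;> simp_all [gadgetWeight, E, incidences]
  calc
    _ ≤ E.card := by
      rw [← Set.ncard_coe_finset]
      exact Set.ncard_le_ncard h_sub E.finite_toSet
    _ ≤ incidences.card + incidences.card :=
      (card_union_le _ _).trans (add_le_add card_image_le card_image_le)
    _ = 2 * ∑ e, (c e).card := by rw [card_sigma, two_mul]

variable [DecidableEq A] [Fintype V]

theorem dirCut_image_inl_union_image_inr (W : V ⊕ A → V ⊕ A → ℝ) (S : Finset V) (T : Finset A) :
    dirCut W (S.image Sum.inl ∪ T.image Sum.inr) =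
      ∑ u ∈ S, (∑ v ∈ Sᶜ, W (.inl u) (.inl v) + ∑ e ∈ Tᶜ, W (.inl u) (.inr e)) +
      ∑ e ∈ T, (∑ v ∈ Sᶜ, W (.inr e) (.inl v) + ∑ f ∈ Tᶜ, W (.inr e) (.inr f)) := by
  have h_union : S.image Sum.inl ∪ T.image Sum.inr = S.disjSum T := by ext (v | e) <;> simp
  have h_compl : (S.disjSum T)ᶜ = Sᶜ.disjSum Tᶜ := by ext (v | e) <;> simp
  simp only [dirCut, h_union, h_compl, sum_disjSum]

theorem dirCut_gadgetWeight (c : A → Finset V) (a b : A → ℝ) (S : Finset V) (T : Finset A) :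
    dirCut (gadgetWeight c a b) (S.image Sum.inl ∪ T.image Sum.inr) =
      ∑ e ∈ T, ((c e \ S).card : ℝ) * b e + ∑ e ∈ Tᶜ, ((S ∩ c e).card : ℝ) * a e := by
  have h_compl : ∀ e, Sᶜ ∩ c e = c e \ S := fun e => by rw [inter_comm, sdiff_eq_inter_compl]
  rw [dirCut_image_inl_union_image_inr]
  simp only [gadgetWeight, sum_const_zero, zero_add, add_zero]
  rw [sum_comm, add_comm]
  simp only [sum_ite_mem, sum_const, nsmul_eq_mul, h_compl]

theorem iInf_sum_add_sum_compl (f g : A → ℝ) :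
    ⨅ T : Finset A, (∑ e ∈ T, f e + ∑ e ∈ Tᶜ, g e) = ∑ e, min (f e) (g e) := by
  apply le_antisymm
  · refine (ciInf_le (Set.finite_range _).bddBelow ({e | f e ≤ g e} : Finset A)).trans_eq ?_
    rw [← sum_add_sum_compl ({e | f e ≤ g e} : Finset A) fun e => min (f e) (g e)]
    congr 1 <;> refine sum_congr rfl fun e he => ?_
    · exact (min_eq_left (by simpa using he)).symm
    · exact (min_eq_right (le_of_not_ge (by simpa using he))).symm
  · refine le_ciInf fun T => ?_
    rw [← sum_add_sum_compl T]
    exact add_le_add (sum_le_sum fun e _ => min_le_left _ _)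
      (sum_le_sum fun e _ => min_le_right _ _)

theorem augmentedCut_gadgetWeight (c : A → Finset V) (a b : A → ℝ) (S : Finset V) :
    augmentedCut (gadgetWeight c a b) S =
      ∑ e, min (((S ∩ c e).card : ℝ) * a e) (((c e \ S).card : ℝ) * b e) := by
  simp only [augmentedCut, dirCut_gadgetWeight, iInf_sum_add_sum_compl, min_comm]

end Gadgets

section Sparsifier

variable {V ι A : Type*}

/-- The weight scale of the `j`-th of the `N` auxiliary nodes that serve the set `c i`, for
`p = (i, j)`: the coefficient of the `j`-th tent in `w i * |c i| * tentSum (sinSqNode N) N`. -/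
noncomputable def tentScale (N : ℕ) (c : ι → Finset V) (w : ι → ℝ) (p : ι × Fin N) : ℝ :=
  w p.1 * (c p.1).card * (sinSqNode N (p.2 + 2) - sinSqNode N p.2)

variable {N : ℕ} {c : ι → Finset V} {w : ι → ℝ}

theorem tentScale_nonneg (hw : ∀ i, 0 ≤ w i) (p : ι × Fin N) : 0 ≤ tentScale N c w p := by
  have h_mono : sinSqNode N p.2 ≤ sinSqNode N (p.2 + 2) :=
    monotoneOn_sinSqNode N (Set.mem_Iic.mpr (by omega)) (Set.mem_Iic.mpr (by omega)) (by omega)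
  exact mul_nonneg (mul_nonneg (hw _) (Nat.cast_nonneg _)) (sub_nonneg.mpr h_mono)

variable [DecidableEq V]

/-- The gadget graph with `N` auxiliary nodes for each set `c i`, one for each tent of
`tentSum (sinSqNode N) N`. The auxiliary nodes are indexed through `e` by an arbitrary type. -/
noncomputable def tentGadget (N : ℕ) (c : ι → Finset V) (w : ι → ℝ) (e : A ≃ ι × Fin N) :
    V ⊕ A → V ⊕ A → ℝ :=
  gadgetWeight (fun x => c (e x).1)
    (fun x => tentScale N c w (e x) * (1 - sinSqNode N ((e x).2 + 1)))
    (fun x => tentScale N c w (e x) * sinSqNode N ((e x).2 + 1))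

theorem tentGadget_nonneg (hw : ∀ i, 0 ≤ w i) (e : A ≃ ι × Fin N) (u v : V ⊕ A) :
    0 ≤ tentGadget N c w e u v :=
  gadgetWeight_nonneg
    (fun _ => mul_nonneg (tentScale_nonneg hw _) (sub_nonneg.mpr (sinSqNode_le_one N _)))
    (fun _ => mul_nonneg (tentScale_nonneg hw _) (sinSqNode_nonneg N _)) u v

variable [Fintype ι]

theorem ncard_tentGadget_ne_zero_le (e : A ≃ ι × Fin N) :
    {p : (V ⊕ A) × (V ⊕ A) | tentGadget N c w e p.1 p.2 ≠ 0}.ncard ≤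
      2 * N * ∑ i, (c i).card := by
  let _ : Fintype A := Fintype.ofEquiv _ e.symm
  refine (ncard_gadgetWeight_ne_zero_le _ _ _).trans_eq ?_
  rw [e.sum_comp (fun p => (c p.1).card), Fintype.sum_prod_type]
  simp only [sum_const, card_univ, Fintype.card_fin, smul_eq_mul, mul_assoc, mul_sum]

variable [Fintype V] [Fintype A] [DecidableEq A]

theorem augmentedCut_tentGadget (hw : ∀ i, 0 ≤ w i) (e : A ≃ ι × Fin N) (S : Finset V) :
    augmentedCut (tentGadget N c w e) S =
      ∑ i, w i * ((c i).card * tentSum (sinSqNode N) N (S ∩ c i).card (c i \ S).card) := by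
  rw [tentGadget, augmentedCut_gadgetWeight,
    e.sum_comp fun p => min
      (((S ∩ c p.1).card : ℝ) * (tentScale N c w p * (1 - sinSqNode N (p.2 + 1))))
      (((c p.1 \ S).card : ℝ) * (tentScale N c w p * sinSqNode N (p.2 + 1))),
    Fintype.sum_prod_type]
  refine sum_congr rfl fun i _ => ?_
  rw [tentSum, sum_range, mul_sum, mul_sum]
  refine sum_congr rfl fun j _ => ?_
  rw [mul_left_comm, mul_left_comm _ (tentScale N c w (i, j)),
    ← mul_min_of_nonneg _ _ (tentScale_nonneg hw (i, j)), tentScale]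
  ring

theorem augmentedCut_tentGadget_le (hw : ∀ i, 0 ≤ w i) (e : A ≃ ι × Fin N) (S : Finset V) :
    augmentedCut (tentGadget N c w e) S ≤ cooccurrenceCut c w S := by
  rw [augmentedCut_tentGadget hw, cooccurrenceCut]
  refine sum_le_sum fun i _ => ?_
  rw [mul_assoc, ← cast_card_inter_add_cast_card_sdiff S (c i)]
  exact mul_le_mul_of_nonneg_left
    (add_mul_tentSum_sinSqNode_le N (Nat.cast_nonneg _) (Nat.cast_nonneg _)) (hw i)

theorem cos_sq_mul_cooccurrenceCut_le (hw : ∀ i, 0 ≤ w i) (e : A ≃ ι × Fin N) (S : Finset V) :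
    cos (π / (2 * (N + 1))) ^ 2 * cooccurrenceCut c w S ≤
      augmentedCut (tentGadget N c w e) S := by
  rw [augmentedCut_tentGadget hw, cooccurrenceCut, mul_sum]
  refine sum_le_sum fun i _ => ?_
  rw [mul_assoc, mul_left_comm, ← cast_card_inter_add_cast_card_sdiff S (c i)]
  exact mul_le_mul_of_nonneg_left
    (cos_sq_mul_le_add_mul_tentSum_sinSqNode N (Nat.cast_nonneg _) (Nat.cast_nonneg _)) (hw i)

end Sparsifier

theorem one_le_one_add_mul_cos_sq {ε : ℝ} (hε : 0 < ε) {N : ℕ} (hN : 2 / √ε ≤ N) :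
    1 ≤ (1 + ε) * cos (π / (2 * (N + 1))) ^ 2 := by
  have h_pos : 0 < 2 / √ε := by positivity
  have hN1 : (1 : ℝ) ≤ N := by exact_mod_cast Nat.cast_pos.mp (h_pos.trans_le hN)
  have hN_sq : 4 ≤ ε * N ^ 2 := by
    have := pow_le_pow_left₀ h_pos.le hN 2
    rw [div_pow, sq_sqrt hε.le, div_le_iff₀ hε] at this
    linarith
  have h_pi : π ^ 2 ≤ 10 := by nlinarith [pi_lt_d2, pi_pos]
  have h_angle : (1 + ε) * (π / (2 * (N + 1))) ^ 2 ≤ ε := by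
    rw [div_pow, ← mul_div_assoc, div_le_iff₀ (by positivity)]
    nlinarith
  have h_sin : sin (π / (2 * (N + 1))) ^ 2 ≤ (π / (2 * (N + 1))) ^ 2 := sin_sq_le_sq
  rw [cos_sq']
  nlinarith

theorem augmented_sparsifier_cooccurrence_general {V ι : Type*} [Fintype V] [DecidableEq V]
    [Fintype ι] (c : ι → Finset V) (w : ι → ℝ) (hw : ∀ i, 0 ≤ w i) {ε : ℝ} (hε : 0 < ε) :
    ∃ W : V ⊕ Fin (Fintype.card ι * ⌈2 / √ε⌉₊) → V ⊕ Fin (Fintype.card ι * ⌈2 / √ε⌉₊) → ℝ,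
      (∀ u v, 0 ≤ W u v) ∧
      {p : (V ⊕ Fin _) × (V ⊕ Fin _) | W p.1 p.2 ≠ 0}.ncard ≤
        2 * ⌈2 / √ε⌉₊ * ∑ i, (c i).card ∧
      ∀ S : Finset V, cooccurrenceCut c w S ≤ augmentedCut W S ∧
        augmentedCut W S ≤ (1 + ε) * cooccurrenceCut c w S := by
  set N := ⌈2 / √ε⌉₊
  have e : Fin (Fintype.card ι * N) ≃ ι × Fin N :=
    (Fintype.equivFinOfCardEq (by rw [Fintype.card_prod, Fintype.card_fin])).symm
  have hw' : ∀ i, 0 ≤ (1 + ε) * w i := fun i => mul_nonneg (by positivity) (hw i)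
  refine ⟨tentGadget N c (fun i => (1 + ε) * w i) e, tentGadget_nonneg hw' e,
    ncard_tentGadget_ne_zero_le e, fun S => ⟨?_, ?_⟩⟩
  · calc cooccurrenceCut c w S
        ≤ (1 + ε) * cos (π / (2 * (N + 1))) ^ 2 * cooccurrenceCut c w S :=
          le_mul_of_one_le_left (cooccurrenceCut_nonneg c hw S)
            (one_le_one_add_mul_cos_sq hε (Nat.le_ceil _))
      _ = cos (π / (2 * (N + 1))) ^ 2 * cooccurrenceCut c (fun i => (1 + ε) * w i) S := by
          rw [cooccurrenceCut_const_mul]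
          ring
      _ ≤ _ := cos_sq_mul_cooccurrenceCut_le hw' e S
  · rw [← cooccurrenceCut_const_mul]
    exact augmentedCut_tentGadget_le hw' e S

theorem natCeil_two_div_sqrt_le {ε : ℝ} (hε : 0 < ε) (hε1 : ε ≤ 1) :
    (⌈2 / √ε⌉₊ : ℝ) ≤ 3 * ((1 / √ε) * (1 + logb 2 (1 + logb 2 (1 / ε)))) := by
  have h_log : 0 ≤ logb 2 (1 / ε) := logb_nonneg one_lt_two (one_le_one_div hε hε1)
  have h_loglog : 0 ≤ logb 2 (1 + logb 2 (1 / ε)) := logb_nonneg one_lt_two (by linarith)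
  have h_inv : 1 ≤ 1 / √ε := one_le_one_div (sqrt_pos.mpr hε) (sqrt_le_one.mpr hε1)
  calc (⌈2 / √ε⌉₊ : ℝ) ≤ 2 / √ε + 1 := (Nat.ceil_lt_add_one (by positivity)).le
    _ ≤ 3 * (1 / √ε) := by
      rw [← mul_one_div]
      linarith
    _ ≤ 3 * ((1 / √ε) * (1 + logb 2 (1 + logb 2 (1 / ε)))) := by
      gcongr
      exact le_mul_of_one_le_right (by positivity) (by linarith)

/-- **Augmented cut sparsifiers for co-occurrence graphs.**
There is an absolute constant `C > 0` such that: for every finite node set `V`, finite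
collection of co-occurrence sets `c : ι → Finset V` with nonnegative weights `wc`, and every
`ε ∈ (0,1)`, setting `F(ε) = ε^{-1/2}(1 + log₂(1 + log₂(1/ε)))`, there are an auxiliary set
`A = Fin m` with `m ≤ C·|ι|·F(ε)` and a nonnegative weight function on `(V ⊕ A) × (V ⊕ A)`
with at most `C·F(ε)·∑_c |c|` nonzero values whose augmented cut `(1+ε)`-approximates the
co-occurrence cut function `S ↦ ∑_c wc_c·|S ∩ c|·|c \ S|`. -/
theorem augmented_sparsifier_cooccurrence :
    ∃ C : ℝ, 0 < C ∧
      ∀ (V : Type) [Fintype V] [DecidableEq V]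
        (ι : Type) [Fintype ι] (c : ι → Finset V) (wc : ι → ℝ),
        (∀ i, 0 ≤ wc i) →
        ∀ ε : ℝ, 0 < ε → ε < 1 →
        ∃ (m : ℕ) (W : (V ⊕ Fin m) → (V ⊕ Fin m) → ℝ),
          (∀ u v, 0 ≤ W u v) ∧
          (m : ℝ) ≤ C * (Fintype.card ι : ℝ) *
              ((1 / Real.sqrt ε) * (1 + Real.logb 2 (1 + Real.logb 2 (1 / ε)))) ∧
          (({p : (V ⊕ Fin m) × (V ⊕ Fin m) | W p.1 p.2 ≠ 0}.ncard : ℝ)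
            ≤ C * ((1 / Real.sqrt ε) * (1 + Real.logb 2 (1 + Real.logb 2 (1 / ε)))) *
                (∑ i, ((c i).card : ℝ))) ∧
          ∀ S : Finset V,
            (∑ i, wc i * ((S ∩ c i).card : ℝ) * (((c i) \ S).card : ℝ))
              ≤ (⨅ T : Finset (Fin m), dirCut W (S.image Sum.inl ∪ T.image Sum.inr)) ∧
            (⨅ T : Finset (Fin m), dirCut W (S.image Sum.inl ∪ T.image Sum.inr))
              ≤ (1 + ε) * ∑ i, wc i * ((S ∩ c i).card : ℝ) * (((c i) \ S).card : ℝ) := by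
  refine ⟨6, by norm_num, fun V _ _ ι _ c wc hwc ε hε hε1 => ?_⟩
  obtain ⟨W, hW, h_edges, h_cut⟩ := augmented_sparsifier_cooccurrence_general c wc hwc hε
  have hN := natCeil_two_div_sqrt_le hε hε1.le
  refine ⟨_, W, hW, ?_, ?_, h_cut⟩
  · push_cast
    calc (Fintype.card ι : ℝ) * ⌈2 / √ε⌉₊
        ≤ Fintype.card ι * (6 * ((1 / √ε) * (1 + logb 2 (1 + logb 2 (1 / ε))))) := by
          gcongr
          linarith [Nat.cast_nonneg (α := ℝ) ⌈2 / √ε⌉₊]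
      _ = _ := by ring
  · refine (Nat.cast_le.mpr h_edges).trans ?_
    push_cast
    exact mul_le_mul_of_nonneg_right (by linarith) (by positivity)
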